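/- arXiv:2205.08854 — 2 statements merged into one kernel-verified Lean document; each statement's English description precedes it below -/
import Mathlib

section
/- Every rational submonoid M of F is finitely generated: there exists a finite subset X ⊆ M such that M equals the submonoid of F generated by X (equivalently, M = X* = ⋃_{k≥0} X^k). -/
/-!
An element `u = (l, p, r)` of `F` is a walk on `ℤ` that starts at `0`, ends at `p` and has visited
exactly the interval `[l, r]`; a product concatenates walks. In each case below the generators are
all elements of `M` of bounded size, and the task is to factor a large element.

If `p ≥ 0` on all of `M`, rationality is used only to see that `l` is bounded below and `r - p`
bounded above (`IsRat.bounds`: a long descent could otherwise be repeated). Elements then have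
finitely many pairs `(l, r - p)`, and if `w` is an element with large `p` and the same `r - p` as
`u`, right multiplication by `w` shifts `u` to `(l, p + w.p, r + w.p)`. So `u` is a small
representative of its class modulo `w.p` times a power of `w` (`fg_of_nonneg`). The case `p ≤ 0`
follows by reflection.

Otherwise the values of `p` on `M` form a group `dℤ` with `d > 0` (`exists_period`), and two
elements of projections `±d` allow one to move freely by multiples of `d` inside an interval, except
near its ends (`exists_move`). An element of large width whose start and end are both far from the
ends of its interval is then generated: walk to the left end, touch it by a fixed element with the
right residue of `l` modulo `d`, walk to the right end, touch it in the same manner, and walk to the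
final position (`mem_of_deep`). To reduce to that situation, rationality enters as a cutting
property (`IsRat.cut`), proved by induction on rational expressions: there is a constant `C` such
that `u` can be cut as `x * y` at the first visit to any prescribed level, with `x * b ∈ M` and
`a * y ∈ M` for some `a`, `b` of size at most `C`. Cutting far from both ends gives
`u = (x * b) * m * (a * y)`, where `m` is the displacement that undoes `b` and `a`; nothing leaves
the interval of `u` (`Split.glue`). If `u` starts near an end of its interval, a cut at bounded
distance makes `x * b` a generator, while `a * y` either has smaller width or has the same
width and starts far from both ends. Cuts at last visits treat the end point of `u` in the same way,
and induction on the width concludes (`fg_of_group`).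
-/

open Pointwise

/-- The monogenic free inverse monoid `F`, realized concretely as the monoid of triples
`u = (uλ, uπ, uρ) ∈ ℤ³` with `uλ ≤ 0 ≤ uρ` and `uλ ≤ uπ ≤ uρ`. -/
@[ext]
structure F where
  l : ℤ
  p : ℤ
  r : ℤ
  hl : l ≤ 0
  hr : 0 ≤ r
  hlp : l ≤ p
  hpr : p ≤ r

namespace F

instance : Mul F where
  mul u v := ⟨min u.l (u.p + v.l), u.p + v.p, max u.r (u.p + v.r),
    by have h1 := u.hl; have h2 := v.hl; omega,
    by have h1 := u.hr; have h2 := v.hr; omega,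
    by have h1 := u.hlp; have h2 := v.hlp; omega,
    by have h1 := u.hpr; have h2 := v.hpr; omega⟩

instance : One F where
  one := ⟨0, 0, 0, le_refl 0, le_refl 0, le_refl 0, le_refl 0⟩

@[simp] theorem mul_l (u v : F) : (u * v).l = min u.l (u.p + v.l) := rfl
@[simp] theorem mul_p (u v : F) : (u * v).p = u.p + v.p := rfl
@[simp] theorem mul_r (u v : F) : (u * v).r = max u.r (u.p + v.r) := rfl
@[simp] theorem one_l : (1 : F).l = 0 := rfl
@[simp] theorem one_p : (1 : F).p = 0 := rfl
@[simp] theorem one_r : (1 : F).r = 0 := rfl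

instance : Monoid F where
  mul_assoc u v w := by ext <;> simp <;> omega
  one_mul u := by have := u.hl; have := u.hr; ext <;> simp <;> omega
  mul_one u := by have := u.hlp; have := u.hpr; ext <;> simp <;> omega

/-- The generator `a = (0,1,1)` of `F`. -/
def a : F := ⟨0, 1, 1, by omega, by omega, by omega, by omega⟩

/-- The inverse `a⁻¹ = (-1,-1,0)` of the generator. -/
def ainv : F := ⟨-1, -1, 0, by omega, by omega, by omega, by omega⟩

/-- Inversion in `F`: `u⁻¹ = (uλ - uπ, -uπ, uρ - uπ)`. -/
def inv (u : F) : F := ⟨u.l - u.p, -u.p, u.r - u.p,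
  by have := u.hlp; omega, by have := u.hpr; omega,
  by have := u.hl; omega, by have := u.hr; omega⟩

/-- Rational subsets of `F`: the smallest family of subsets containing all finite subsets
and closed under binary union, setwise product, and star. -/
inductive IsRat : Set F → Prop
  | finite : ∀ S : Set F, S.Finite → IsRat S
  | union : ∀ S T : Set F, IsRat S → IsRat T → IsRat (S ∪ T)
  | mul : ∀ S T : Set F, IsRat S → IsRat T → IsRat (S * T)
  | star : ∀ S : Set F, IsRat S → IsRat (⋃ k : ℕ, S ^ k)

/-- The canonical homomorphism `θ` from the free monoid on the two-letter alphabet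
`{a, a⁻¹}` (encoded as `Bool`: `true ↦ a`, `false ↦ a⁻¹`) onto `F`. -/
def theta : FreeMonoid Bool →* F := FreeMonoid.lift fun b => bif b then a else ainv

end F

namespace F

/-! ### Symmetries of `F` and of its rational subsets -/

/-- The automorphism `(l, p, r) ↦ (-r, -p, -l)` of `F` that exchanges left and right. -/
def refl : F →* F where
  toFun u := ⟨-u.r, -u.p, -u.l, by have := u.hr; omega, by have := u.hl; omega,
    by have := u.hpr; omega, by have := u.hlp; omega⟩
  map_one' := by ext <;> simp
  map_mul' u v := by ext <;> simp <;> omega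

@[simp] theorem refl_l (u : F) : (refl u).l = -u.r := rfl
@[simp] theorem refl_p (u : F) : (refl u).p = -u.p := rfl
@[simp] theorem refl_r (u : F) : (refl u).r = -u.l := rfl
@[simp] theorem inv_l (u : F) : (inv u).l = u.l - u.p := rfl
@[simp] theorem inv_p (u : F) : (inv u).p = -u.p := rfl
@[simp] theorem inv_r (u : F) : (inv u).r = u.r - u.p := rfl

theorem mul_l_spec (u v : F) : (u * v).l ≤ u.l ∧ (u * v).l ≤ u.p + v.l ∧
    ((u * v).l = u.l ∨ (u * v).l = u.p + v.l) := by
  rw [mul_l]; omega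

theorem mul_r_spec (u v : F) : u.r ≤ (u * v).r ∧ u.p + v.r ≤ (u * v).r ∧
    ((u * v).r = u.r ∨ (u * v).r = u.p + v.r) := by
  rw [mul_r]; omega

theorem le_mul_l {z : ℤ} {u v : F} (h₁ : z ≤ u.l) (h₂ : z - u.p ≤ v.l) : z ≤ (u * v).l := by
  rw [mul_l]; omega

theorem mul_r_le {z : ℤ} {u v : F} (h₁ : u.r ≤ z) (h₂ : v.r ≤ z - u.p) : (u * v).r ≤ z := by
  rw [mul_r]; omega

theorem refl_refl (u : F) : refl (refl u) = u := by ext <;> simp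

theorem inv_inv' (u : F) : inv (inv u) = u := by ext <;> simp

theorem inv_mul' (u v : F) : inv (u * v) = inv v * inv u := by
  ext <;> simp <;> omega

theorem IsRat.image_refl {S : Set F} (h : IsRat S) : IsRat (refl '' S) := by
  induction h with
  | finite S hS => exact .finite _ (hS.image _)
  | union S T _ _ hS hT => rw [Set.image_union]; exact .union _ _ hS hT
  | mul S T _ _ hS hT => rw [Set.image_mul]; exact .mul _ _ hS hT
  | star S _ hS =>
    rw [Set.image_iUnion]
    simp_rw [Set.image_pow]
    exact .star _ hS

theorem image_inv_mul (S T : Set F) : inv '' (S * T) = inv '' T * inv '' S := by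
  ext u
  simp only [Set.mem_image, Set.mem_mul]
  constructor
  · rintro ⟨_, ⟨s, hs, t, ht, rfl⟩, rfl⟩
    exact ⟨_, ⟨t, ht, rfl⟩, _, ⟨s, hs, rfl⟩, (inv_mul' s t).symm⟩
  · rintro ⟨_, ⟨t, ht, rfl⟩, _, ⟨s, hs, rfl⟩, rfl⟩
    exact ⟨_, ⟨s, hs, t, ht, rfl⟩, inv_mul' s t⟩

theorem image_inv_pow (S : Set F) (k : ℕ) : inv '' (S ^ k) = (inv '' S) ^ k := by
  induction k with
  | zero =>
    have : inv 1 = 1 := by ext <;> simp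
    simp [← Set.singleton_one, this]
  | succ k ih => rw [pow_succ, image_inv_mul, ih, pow_succ']

theorem IsRat.image_inv {S : Set F} (h : IsRat S) : IsRat (inv '' S) := by
  induction h with
  | finite S hS => exact .finite _ (hS.image _)
  | union S T _ _ hS hT => rw [Set.image_union]; exact .union _ _ hS hT
  | mul S T _ _ hS hT => rw [image_inv_mul]; exact .mul _ _ hT hS
  | star S _ hS =>
    rw [Set.image_iUnion]
    simp_rw [image_inv_pow]
    exact .star _ hS

/-! ### Stars as submonoids -/

/-- The star `⋃ k, S ^ k` of a subset of `F`, as a submonoid. -/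
def starM (S : Set F) : Submonoid F where
  carrier := ⋃ k : ℕ, S ^ k
  one_mem' := Set.mem_iUnion.2 ⟨0, by simp⟩
  mul_mem' := by
    intro x y hx hy
    obtain ⟨i, hi⟩ := Set.mem_iUnion.1 hx
    obtain ⟨j, hj⟩ := Set.mem_iUnion.1 hy
    exact Set.mem_iUnion.2 ⟨i + j, by rw [pow_add]; exact Set.mul_mem_mul hi hj⟩

theorem coe_starM (S : Set F) : (starM S : Set F) = ⋃ k : ℕ, S ^ k := rfl

theorem subset_starM (S : Set F) : S ⊆ starM S := fun x hx =>
  Set.mem_iUnion.2 ⟨1, by simpa using hx⟩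

theorem starM_induction {S : Set F} {P : F → Prop} (h1 : P 1)
    (hm : ∀ s ∈ S, ∀ v ∈ starM S, P v → P (s * v)) : ∀ u ∈ starM S, P u := by
  intro u hu
  obtain ⟨k, hk⟩ := Set.mem_iUnion.1 hu
  clear hu
  induction k generalizing u with
  | zero => simp at hk; subst hk; exact h1
  | succ k ih =>
    rw [pow_succ'] at hk
    obtain ⟨s, hs, v, hv, rfl⟩ := Set.mem_mul.1 hk
    exact hm s hs v (Set.mem_iUnion.2 ⟨k, hv⟩) (ih v hv)

theorem starM_le {S : Set F} {M : Submonoid F} (h : S ⊆ M) : starM S ≤ M := fun u hu =>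
  starM_induction (P := (· ∈ M)) M.one_mem (fun _ hs _ _ hv => M.mul_mem (h hs) hv) u hu

/-! ### Cutting rational sets -/

/-- `Bd C u` says that the interval `[u.l, u.r]` is contained in `[-C, C]`. -/
def Bd (C : ℤ) (u : F) : Prop := -C ≤ u.l ∧ u.r ≤ C

theorem Bd.mono {C D : ℤ} (h : C ≤ D) {u : F} (hu : Bd C u) : Bd D u :=
  ⟨by have := hu.1; omega, by have := hu.2; omega⟩

theorem Bd.mul {C D : ℤ} {u v : F} (hu : Bd C u) (hv : Bd D v) : Bd (C + D) (u * v) := by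
  obtain ⟨h1, h2⟩ := hu
  obtain ⟨h3, h4⟩ := hv
  have := u.hlp; have := u.hpr; have := v.hl; have := v.hr
  constructor <;> simp <;> omega

theorem exists_bd (u : F) : ∃ C, 0 ≤ C ∧ Bd C u :=
  ⟨u.r - u.l, by have := u.hl; have := u.hr; omega,
    by have := u.hl; have := u.hr; constructor <;> omega⟩

/-- `u = x * y`, where the two halves `x` and `y` occur in `S` with complements
`b` and `a` bounded by `C`. -/
def Split (S : Set F) (C : ℤ) (u x y : F) : Prop :=
  u = x * y ∧ ∃ a b : F, Bd C a ∧ Bd C b ∧ x * b ∈ S ∧ a * y ∈ S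

/-- The first visit of an element of a rational set to the level `k ≥ 0` can be turned into a cut
whose halves are completed in the set by elements of bounded size. This replaces an automaton for
`S`: a cut point would be a state, and `a`, `b` fixed paths into and out of it. The error `C` in
the level comes from the finite sets, whose elements are treated as single letters. -/
theorem IsRat.cut {S : Set F} (h : IsRat S) : ∃ C : ℤ, 0 ≤ C ∧ ∀ u ∈ S, ∀ k : ℤ, 0 ≤ k → k ≤ u.r →
    ∃ x y : F, Split S C u x y ∧ k - C ≤ x.p ∧ x.r ≤ k + C := by
  induction h with
  | finite S hS =>
    obtain ⟨C, hC⟩ := (hS.image fun u : F => u.r - u.l).bddAbove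
    refine ⟨max C 0, le_max_right _ _, fun u hu k hk hku => ?_⟩
    have h1 : u.r - u.l ≤ C := hC ⟨u, hu, rfl⟩
    have := u.hl; have := u.hr; have := u.hlp; have := u.hpr
    refine ⟨u, 1, ⟨by simp, u, 1, ⟨by omega, by omega⟩, ⟨by simp, by simp⟩, by simpa, by simpa⟩,
      by omega, by omega⟩
  | union S T _ _ hS hT =>
    obtain ⟨C, hC0, hC⟩ := hS
    obtain ⟨D, hD0, hD⟩ := hT
    refine ⟨max C D, by omega, ?_⟩
    rintro u (hu | hu) k hk hku
    · obtain ⟨x, y, ⟨e, a, b, ha, hb, hx, hy⟩, h1, h2⟩ := hC u hu k hk hku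
      exact ⟨x, y, ⟨e, a, b, ha.mono (by omega), hb.mono (by omega), .inl hx, .inl hy⟩,
        by omega, by omega⟩
    · obtain ⟨x, y, ⟨e, a, b, ha, hb, hx, hy⟩, h1, h2⟩ := hD u hu k hk hku
      exact ⟨x, y, ⟨e, a, b, ha.mono (by omega), hb.mono (by omega), .inr hx, .inr hy⟩,
        by omega, by omega⟩
  | mul S T _ _ hS hT =>
    obtain ⟨C, hC0, hC⟩ := hS
    obtain ⟨D, hD0, hD⟩ := hT
    rcases S.eq_empty_or_nonempty with rfl | ⟨s₀, hs₀⟩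
    · exact ⟨0, le_rfl, by simp⟩
    rcases T.eq_empty_or_nonempty with rfl | ⟨t₀, ht₀⟩
    · exact ⟨0, le_rfl, by simp⟩
    obtain ⟨A, hA0, hA⟩ := exists_bd s₀
    obtain ⟨B, hB0, hB⟩ := exists_bd t₀
    refine ⟨A + B + C + D, by omega, ?_⟩
    intro u hu k hk hku
    obtain ⟨s, hs, t, ht, rfl⟩ := Set.mem_mul.1 hu
    rw [mul_r] at hku
    by_cases hks : k ≤ s.r
    · obtain ⟨x, y, ⟨e, a, b, ha, hb, hx, hy⟩, h1, h2⟩ := hC s hs k hk hks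
      refine ⟨x, y * t, ⟨by rw [e, mul_assoc], a, b * t₀, ha.mono (by omega),
        (hb.mul hB).mono (by omega), ?_, ?_⟩, by omega, by omega⟩
      · rw [← mul_assoc]; exact Set.mul_mem_mul hx ht₀
      · rw [← mul_assoc]; exact Set.mul_mem_mul hy ht
    · have := s.hpr
      obtain ⟨x, y, ⟨e, a, b, ha, hb, hx, hy⟩, h1, h2⟩ :=
        hD t ht (k - s.p) (by omega) (by omega)
      refine ⟨s * x, y, ⟨by rw [e, mul_assoc], s₀ * a, b, (hA.mul ha).mono (by omega),
        hb.mono (by omega), ?_, ?_⟩, by simp; omega, by simp; omega⟩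
      · rw [mul_assoc]; exact Set.mul_mem_mul hs hx
      · rw [mul_assoc]; exact Set.mul_mem_mul hs₀ hy
  | star S _ hS =>
    obtain ⟨C, hC0, hC⟩ := hS
    refine ⟨C, hC0, ?_⟩
    rw [← coe_starM]
    refine starM_induction ?_ ?_
    · intro k hk hk1
      exact ⟨1, 1, ⟨by simp, 1, 1, ⟨by simpa, by simpa⟩, ⟨by simpa, by simpa⟩,
        by simp, by simp⟩, by simp at hk1 ⊢; omega, by simp; omega⟩
    · intro s hs v hv ih k hk hku
      rw [mul_r] at hku
      by_cases hks : k ≤ s.r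
      · obtain ⟨x, y, ⟨e, a, b, ha, hb, hx, hy⟩, h1, h2⟩ := hC s hs k hk hks
        refine ⟨x, y * v, ⟨by rw [e, mul_assoc], a, b, ha, hb, subset_starM S hx, ?_⟩, h1, h2⟩
        rw [← mul_assoc]
        exact (starM S).mul_mem (subset_starM S hy) hv
      · have := s.hpr
        obtain ⟨x, y, ⟨e, a, b, ha, hb, hx, hy⟩, h1, h2⟩ := ih (k - s.p) (by omega) (by omega)
        refine ⟨s * x, y, ⟨by rw [e, mul_assoc], a, b, ha, hb, ?_, hy⟩,
          by simp; omega, by simp; omega⟩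
        rw [mul_assoc]
        exact (starM S).mul_mem (subset_starM S hs) hx

theorem Split.mono {S : Set F} {C D : ℤ} (h : C ≤ D) {u x y : F} (hu : Split S C u x y) :
    Split S D u x y := by
  obtain ⟨e, a, b, ha, hb, hx, hy⟩ := hu
  exact ⟨e, a, b, ha.mono h, hb.mono h, hx, hy⟩

theorem Split.of_refl {S : Set F} {C : ℤ} {u x y : F} (h : Split (refl '' S) C (refl u) x y) :
    Split S C u (refl x) (refl y) := by
  obtain ⟨e, a, b, ⟨ha, ha'⟩, ⟨hb, hb'⟩, ⟨s, hs, hx⟩, ⟨t, ht, hy⟩⟩ := h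
  refine ⟨by rw [← map_mul, ← e, refl_refl], refl a, refl b,
    ⟨by simp; omega, by simp; omega⟩, ⟨by simp; omega, by simp; omega⟩, ?_, ?_⟩
  · rw [← map_mul, ← hx, refl_refl]; exact hs
  · rw [← map_mul, ← hy, refl_refl]; exact ht

/-- The inverse exchanges the two halves; inverting a bounded element may double the bound. -/
theorem Split.of_inv {S : Set F} {C : ℤ} {u x y : F} (h : Split (inv '' S) C (inv u) x y) :
    Split S (2 * C) u (inv y) (inv x) := by
  obtain ⟨e, a, b, ⟨ha, ha'⟩, ⟨hb, hb'⟩, ⟨s, hs, hx⟩, ⟨t, ht, hy⟩⟩ := h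
  have := a.hlp; have := a.hpr; have := b.hlp; have := b.hpr
  refine ⟨by rw [← inv_mul', ← e, inv_inv'], inv b, inv a,
    ⟨by simp; omega, by simp; omega⟩, ⟨by simp; omega, by simp; omega⟩, ?_, ?_⟩
  · rw [← inv_mul', ← hy, inv_inv']; exact ht
  · rw [← inv_mul', ← hx, inv_inv']; exact hs

/-- The cuts at the first and at the last visits to a level above or below the starting point
(for first visits), respectively the end point (for last visits). -/
theorem IsRat.cuts {S : Set F} (h : IsRat S) : ∃ C : ℤ, 0 ≤ C ∧ ∀ u ∈ S, ∀ k : ℤ, 0 ≤ k →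
    (k ≤ u.r → ∃ x y : F, Split S C u x y ∧ k - C ≤ x.p ∧ x.r ≤ k + C) ∧
    (k ≤ -u.l → ∃ x y : F, Split S C u x y ∧ x.p ≤ C - k ∧ -k - C ≤ x.l) ∧
    (k ≤ u.r - u.p → ∃ x y : F, Split S C u x y ∧ y.p ≤ C - k ∧ y.r - y.p ≤ k + C) ∧
    (k ≤ u.p - u.l → ∃ x y : F, Split S C u x y ∧ k - C ≤ y.p ∧ -k - C ≤ y.l - y.p) := by
  obtain ⟨C₁, h₁, H₁⟩ := h.cut
  obtain ⟨C₂, h₂, H₂⟩ := h.image_refl.cut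
  obtain ⟨C₃, h₃, H₃⟩ := h.image_inv.cut
  obtain ⟨C₄, h₄, H₄⟩ := h.image_refl.image_inv.cut
  refine ⟨2 * (C₁ + C₂ + C₃ + C₄), by omega, fun u hu k hk => ⟨fun hku => ?_, fun hku => ?_,
    fun hku => ?_, fun hku => ?_⟩⟩
  · obtain ⟨x, y, hs, ha, hb⟩ := H₁ u hu k hk hku
    exact ⟨x, y, hs.mono (by omega), by omega, by omega⟩
  · obtain ⟨x, y, hs, ha, hb⟩ := H₂ (refl u) ⟨u, hu, rfl⟩ k hk (by simpa using hku)
    exact ⟨_, _, hs.of_refl.mono (by omega), by simp; omega, by simp; omega⟩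
  · obtain ⟨x, y, hs, ha, hb⟩ := H₃ (inv u) ⟨u, hu, rfl⟩ k hk (by simpa using hku)
    exact ⟨_, _, hs.of_inv.mono (by omega), by simp; omega, by simp; omega⟩
  · obtain ⟨x, y, hs, ha, hb⟩ := H₄ (inv (refl u)) ⟨_, ⟨u, hu, rfl⟩, rfl⟩ k hk
      (by simp; omega)
    exact ⟨_, _, hs.of_inv.of_refl.mono (by omega), by simp; omega, by simp; omega⟩

/-! ### Finite choice of small representatives -/

/-- If `f` takes finitely many values on `P`, every element of `P` has a representative of
minimal size in its fibre, and these representatives have bounded size. -/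
theorem exists_small_rep {α : Type*} (P : Set F) (f : F → α) (hf : (f '' P).Finite)
    (size : F → ℤ) (hsize : ∀ u ∈ P, 0 ≤ size u) :
    ∃ W : ℤ, 0 ≤ W ∧ ∀ u ∈ P, ∃ e ∈ P, f e = f u ∧ size e ≤ W ∧ size e ≤ size u := by
  have key : ∀ u ∈ P, ∃ e ∈ P, f e = f u ∧ ∀ v ∈ P, f v = f u → size e ≤ size v := by
    intro u hu
    obtain ⟨e, ⟨he, hef⟩, hmin⟩ := exists_minimalFor_of_wellFoundedLT
      (fun v => v ∈ P ∧ f v = f u) (fun v => (size v).toNat) ⟨u, hu, rfl⟩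
    refine ⟨e, he, hef, fun v hv hvf => ?_⟩
    have h1 := hsize e he
    have h2 := hsize v hv
    by_contra! hlt
    have := hmin ⟨hv, hvf⟩ (by simp only; omega)
    simp only at this
    omega
  choose! g hgP hgf hgm using key
  have hfin : (size '' (g '' P)).Finite := by
    obtain ⟨s, hs, hsf⟩ := Set.exists_subset_bijOn P f
    have hsfin : s.Finite := Set.Finite.of_finite_image (by rw [hsf.image_eq]; exact hf) hsf.injOn
    refine ((hsfin.image g).image size).subset ?_
    rintro _ ⟨_, ⟨u, hu, rfl⟩, rfl⟩
    obtain ⟨v, hv, hvu⟩ := hsf.surjOn ⟨u, hu, rfl⟩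
    refine ⟨_, ⟨v, hv, rfl⟩, ?_⟩
    have hvP := hs hv
    exact le_antisymm (hgm v hvP _ (hgP u hu) (by rw [hgf u hu, hvu]))
      (hgm u hu _ (hgP v hvP) (by rw [hgf v hvP, hvu]))
  obtain ⟨W, hW⟩ := hfin.bddAbove
  refine ⟨max W 0, le_max_right _ _, fun u hu => ⟨g u, hgP u hu, hgf u hu, ?_, hgm u hu u hu rfl⟩⟩
  exact le_max_of_le_left (hW ⟨_, ⟨u, hu, rfl⟩, rfl⟩)

theorem finite_of_bounds (S : Set F) (A B : ℤ) (h : ∀ u ∈ S, A ≤ u.l ∧ u.r ≤ B) : S.Finite := by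
  have hinj : Function.Injective fun u : F => (u.l, u.p, u.r) := by
    intro u v huv
    simp only [Prod.mk.injEq] at huv
    exact F.ext huv.1 huv.2.1 huv.2.2
  refine Set.Finite.of_finite_image (f := fun u : F => (u.l, u.p, u.r)) ?_ hinj.injOn
  refine ((Set.finite_Icc A B).prod ((Set.finite_Icc A B).prod (Set.finite_Icc A B))).subset ?_
  rintro _ ⟨u, hu, rfl⟩
  have := h u hu
  have := u.hl; have := u.hr; have := u.hlp; have := u.hpr
  simp only [Set.mem_prod, Set.mem_Icc]
  omega

/-! ### Submonoids whose projection lies in `ℕ` -/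

/-- In a rational set on which `p` is bounded below, the path of an element can neither descend far
below its start nor end far below its maximum. -/
theorem IsRat.bounds {S : Set F} (h : IsRat S) : (∃ B : ℤ, ∀ u ∈ S, B ≤ u.p) →
    ∃ C : ℤ, ∀ u ∈ S, -C ≤ u.l ∧ u.r - u.p ≤ C := by
  induction h with
  | finite S hS =>
    intro _
    obtain ⟨C, hC⟩ := (hS.image fun u : F => u.r - u.l).bddAbove
    refine ⟨C, fun u hu => ?_⟩
    have h1 : u.r - u.l ≤ C := hC ⟨u, hu, rfl⟩
    have := u.hl; have := u.hr; have := u.hlp; have := u.hpr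
    omega
  | union S T _ _ hS hT =>
    rintro ⟨B, hB⟩
    obtain ⟨C, hC⟩ := hS ⟨B, fun u hu => hB u (.inl hu)⟩
    obtain ⟨D, hD⟩ := hT ⟨B, fun u hu => hB u (.inr hu)⟩
    refine ⟨max C D, ?_⟩
    rintro u (hu | hu)
    · have := hC u hu; omega
    · have := hD u hu; omega
  | mul S T _ _ hS hT =>
    rintro ⟨B, hB⟩
    rcases S.eq_empty_or_nonempty with rfl | ⟨s₀, hs₀⟩
    · exact ⟨0, by simp⟩
    rcases T.eq_empty_or_nonempty with rfl | ⟨t₀, ht₀⟩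
    · exact ⟨0, by simp⟩
    have hBS : ∀ s ∈ S, B - t₀.p ≤ s.p := fun s hs => by
      have := hB _ (Set.mul_mem_mul hs ht₀); simp at this; omega
    have hBT : ∀ t ∈ T, B - s₀.p ≤ t.p := fun t ht => by
      have := hB _ (Set.mul_mem_mul hs₀ ht); simp at this; omega
    obtain ⟨C, hC⟩ := hS ⟨_, hBS⟩
    obtain ⟨D, hD⟩ := hT ⟨_, hBT⟩
    refine ⟨C.natAbs + D.natAbs + (B - t₀.p).natAbs + (B - s₀.p).natAbs, ?_⟩
    intro u hu
    obtain ⟨s, hs, t, ht, rfl⟩ := Set.mem_mul.1 hu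
    have := hBS s hs; have := hBT t ht; have := hC s hs; have := hD t ht
    rw [mul_l, mul_p, mul_r]
    omega
  | star S _ hS =>
    rintro ⟨B, hB⟩
    rw [← coe_starM] at hB ⊢
    -- an element of negative projection would have powers of arbitrarily negative projection
    have hpos : ∀ s ∈ S, 0 ≤ s.p := by
      intro s hs
      by_contra! hneg
      have hpow : ∀ k : ℕ, (s ^ k).p ≤ -k := by
        intro k
        induction k with
        | zero => simp
        | succ k ih => rw [pow_succ, mul_p]; push_cast; omega
      have h1 := hB _ ((starM S).pow_mem (subset_starM S hs) (B.natAbs + 1))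
      have h2 := hpow (B.natAbs + 1)
      omega
    obtain ⟨C, hC⟩ := hS ⟨0, hpos⟩
    have : ∀ u ∈ starM S, 0 ≤ u.p ∧ -C.natAbs ≤ u.l ∧ u.r - u.p ≤ C.natAbs := by
      refine starM_induction (by simp) ?_
      intro s hs v hv ih
      have := hpos s hs; have := hC s hs
      rw [mul_l, mul_p, mul_r]
      omega
    exact ⟨C.natAbs, fun u hu => (this u hu).2⟩

theorem pow_succ_of_nonneg (w : F) (hw : 0 ≤ w.p) (t : ℕ) :
    (w ^ (t + 1)).l = w.l ∧ (w ^ (t + 1)).p = t * w.p + w.p ∧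
      (w ^ (t + 1)).r = t * w.p + w.r := by
  induction t with
  | zero => simp
  | succ t ih =>
    obtain ⟨h1, h2, h3⟩ := ih
    have := w.hl
    have h0 : 0 ≤ (t : ℤ) * w.p := by positivity
    have e : ((t + 1 : ℕ) : ℤ) * w.p = t * w.p + w.p := by push_cast; ring
    rw [pow_succ, mul_l, mul_p, mul_r, h1, h2, h3, e]
    omega

/-- Large elements are small representatives of `(l, r - p, p mod Q)` times powers of elements with
the right value of `r - p`. -/
theorem fg_of_nonneg (M : Submonoid F) (hM : IsRat (M : Set F)) (hp : ∀ u ∈ M, 0 ≤ u.p) :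
    ∃ X : Set F, X.Finite ∧ X ⊆ M ∧ M ≤ starM X := by
  obtain ⟨C₀, hC₀⟩ := hM.bounds ⟨0, hp⟩
  obtain ⟨C, hCpos, hC⟩ : ∃ C : ℤ, 0 ≤ C ∧ ∀ u ∈ M, -C ≤ u.l ∧ u.r - u.p ≤ C :=
    ⟨C₀.natAbs, by omega, fun u hu => by have := hC₀ u hu; omega⟩
  -- `W₀` bounds a choice of one long element for each value of the right overhang `r - p`
  obtain ⟨W₀, hW₀, H₀⟩ := exists_small_rep {u | u ∈ M ∧ C < u.p} (fun u => u.r - u.p)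
    ((Set.finite_Icc 0 C).subset (by
      rintro _ ⟨u, ⟨hu, -⟩, rfl⟩
      have := hC u hu; have := u.hpr
      simp only [Set.mem_Icc]; omega)) (fun u => u.p) (fun u hu => hp u hu.1)
  -- a common multiple of the projections of these long elements
  obtain ⟨Q, hQ⟩ : ∃ Q : ℤ, Q = (W₀.toNat.factorial : ℤ) := ⟨_, rfl⟩
  have hQpos : 0 < Q := by rw [hQ]; exact_mod_cast Nat.factorial_pos _
  obtain ⟨W₁, hW₁, H₁⟩ := exists_small_rep {u | u ∈ M ∧ C < u.p}
    (fun u => (u.l, u.r - u.p, u.p % Q))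
    (((Set.finite_Icc (-C) 0).prod ((Set.finite_Icc 0 C).prod (Set.finite_Icc 0 Q))).subset (by
      rintro _ ⟨u, ⟨hu, -⟩, rfl⟩
      have := hC u hu; have := u.hpr; have := u.hl
      have := Int.emod_nonneg u.p hQpos.ne'
      have := Int.emod_lt_of_pos u.p hQpos
      simp only [Set.mem_prod, Set.mem_Icc]; omega)) (fun u => u.p) (fun u hu => hp u hu.1)
  refine ⟨{u | u ∈ M ∧ u.p ≤ W₀ + W₁ + C}, ?_, fun u hu => hu.1, ?_⟩
  · refine finite_of_bounds _ (-C) (W₀ + W₁ + C + C) fun u hu => ?_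
    have := hC u hu.1; have := hu.2
    omega
  intro u hu
  by_cases huC : u.p ≤ C
  · exact subset_starM _ ⟨hu, by omega⟩
  obtain ⟨w, ⟨hwM, hwC⟩, hwu, hwW, -⟩ := H₀ u ⟨hu, by omega⟩
  obtain ⟨e, ⟨heM, heC⟩, heu, heW, hele⟩ := H₁ u ⟨hu, by omega⟩
  simp only [Prod.mk.injEq] at heu hwu hwW heW hele
  obtain ⟨he1, he2, he3⟩ := heu
  have hdvd : w.p ∣ u.p - e.p := by
    have hQd : Q ∣ u.p - e.p :=
      Int.dvd_of_emod_eq_zero (Int.emod_eq_emod_iff_emod_sub_eq_zero.1 he3.symm)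
    refine dvd_trans ?_ hQd
    rw [hQ]
    have : w.p = (w.p.toNat : ℤ) := by omega
    rw [this]
    exact_mod_cast Nat.dvd_factorial (by omega) (by omega)
  have heX : e ∈ starM {u | u ∈ M ∧ u.p ≤ W₀ + W₁ + C} := subset_starM _ ⟨heM, by omega⟩
  have hwX : w ∈ starM {u | u ∈ M ∧ u.p ≤ W₀ + W₁ + C} := subset_starM _ ⟨hwM, by omega⟩
  obtain ⟨q, hq⟩ := hdvd
  have hq0 : 0 ≤ q := by
    by_contra! hlt
    have : w.p * q < 0 := mul_neg_of_pos_of_neg (by omega) hlt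
    omega
  obtain ⟨n, rfl⟩ := Int.eq_ofNat_of_zero_le hq0
  rcases n with _ | t
  · have : u = e := by
      simp at hq
      ext <;> omega
    rw [this]; exact heX
  · -- the factor `w` has the same `r - p` as `u`, and `e` the same `l`
    have : u = e * w ^ (t + 1) := by
      obtain ⟨h1, h2, h3⟩ := pow_succ_of_nonneg w (by omega) t
      have h0 : 0 ≤ (t : ℤ) * w.p := mul_nonneg (by positivity) (by omega)
      have e1 : w.p * ((t + 1 : ℕ) : ℤ) = t * w.p + w.p := by push_cast; ring
      rw [e1] at hq
      have := hC e heM; have := hC w hwM; have := w.hpr; have := w.hr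
      have := e.hl; have := e.hr
      ext
      · rw [mul_l, h1]; omega
      · rw [mul_p, h2]; omega
      · rw [mul_r, h3]; omega
    rw [this]
    exact Submonoid.mul_mem _ heX (Submonoid.pow_mem _ hwX _)

/-! ### Submonoids whose projection is a nontrivial group -/

theorem pow_moves (u : F) (d N : ℤ) (hd : 0 ≤ d) (hp : u.p = d) (hu : Bd N u) (k : ℕ) :
    (u ^ k).p = k * d ∧ -N ≤ (u ^ k).l ∧ (u ^ k).r ≤ k * d + N := by
  obtain ⟨h1, h2⟩ := hu
  have := u.hl
  induction k with
  | zero => simp; omega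
  | succ k ih =>
    have h0 : 0 ≤ (k : ℤ) * d := by positivity
    have e : ((k + 1 : ℕ) : ℤ) * d = k * d + d := by push_cast; ring
    rw [pow_succ, mul_l, mul_p, mul_r, e]
    omega

/-- With generators of projections `d` and `-d`, every displacement by a multiple of `d` can be
realized with overhang at most `N`. -/
theorem exists_move (Γ : Submonoid F) (d N : ℤ) (hd : 0 < d) (u v : F) (hu : u ∈ Γ) (hv : v ∈ Γ)
    (hup : u.p = d) (hvp : v.p = -d) (huN : Bd N u) (hvN : Bd N v) (t : ℤ) (ht : d ∣ t) :
    ∃ m ∈ Γ, m.p = t ∧ (-N ≤ m.l ∨ t - N ≤ m.l) ∧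
    (m.r ≤ N ∨ m.r ≤ t + N) := by
  obtain ⟨q, rfl⟩ := ht
  obtain ⟨k, rfl | rfl⟩ := q.eq_nat_or_neg
  · obtain ⟨h1, h2, h3⟩ := pow_moves u d N hd.le hup huN k
    have h0 : 0 ≤ (k : ℤ) * d := by positivity
    rw [mul_comm d]
    exact ⟨u ^ k, Γ.pow_mem hu k, by omega, by omega, by omega⟩
  · obtain ⟨h1, h2, h3⟩ := pow_moves (refl v) d N hd.le (by simp [hvp])
      ⟨by have := hvN.2; simpa using this, by have := hvN.1; simp; omega⟩ k
    have h0 : 0 ≤ (k : ℤ) * d := by positivity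
    have e : d * -(k : ℤ) = -(k * d) := by ring
    rw [← map_pow] at h1 h2 h3
    simp only [refl_l, refl_p, refl_r] at h1 h2 h3
    rw [e]
    exact ⟨v ^ k, Γ.pow_mem hv k, by omega, by omega, by omega⟩

/-- The starting point of `u` is at distance at least `N` from both ends of its interval. -/
def DeepStart (N : ℤ) (u : F) : Prop := N ≤ -u.l ∧ N ≤ u.r

/-- The end point of `u` is at distance at least `N` from both ends of its interval. -/
def DeepEnd (N : ℤ) (u : F) : Prop := N ≤ u.p - u.l ∧ N ≤ u.r - u.p

/-- The two halves of a cut far from both ends of the interval of `u`, completed in `M`, can be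
glued back together: the completions `a`, `b` and the correcting displacement between them stay
inside the interval. -/
theorem Split.glue {M Γ : Submonoid F} {d N C : ℤ} (hN : 0 ≤ N)
    (hdM : ∀ u ∈ M, d ∣ u.p)
    (hmove : ∀ t, d ∣ t → ∃ m ∈ Γ, m.p = t ∧ (-N ≤ m.l ∨ t - N ≤ m.l) ∧
    (m.r ≤ N ∨ m.r ≤ t + N))
    {u x y : F} (hu : u ∈ M) (h : Split M C u x y)
    (hl : u.l + N + 2 * C ≤ x.p) (hr : x.p + N + 2 * C ≤ u.r) :
    ∃ g ∈ M, ∃ v ∈ M, ∃ c c', -C ≤ c ∧ c ≤ C ∧ -C ≤ c' ∧ c' ≤ C ∧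
      (g ∈ Γ → v ∈ Γ → u ∈ Γ) ∧
      g.p = x.p + c ∧ u.l ≤ g.l ∧ g.r ≤ u.r ∧ x.l - 2 * C ≤ g.l ∧ g.r ≤ x.r + 2 * C ∧
      v.p = y.p + c' ∧ u.l ≤ v.l + (x.p - c') ∧ v.r + (x.p - c') ≤ u.r ∧
      y.l - y.p - 2 * C ≤ v.l - v.p ∧ v.r - v.p ≤ y.r - y.p + 2 * C := by
  obtain ⟨e, a, b, ⟨ha, ha'⟩, ⟨hb, hb'⟩, hx, hy⟩ := h
  have hab : d ∣ -(a.p + b.p) := by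
    have h1 := hdM _ hx
    have h2 := hdM _ hy
    have h3 := hdM _ hu
    rw [e] at h3
    simp only [mul_p] at h1 h2 h3
    have : -(a.p + b.p) = (x.p + y.p) - (x.p + b.p) - (a.p + y.p) := by ring
    rw [this]
    exact (h3.sub h1).sub h2
  obtain ⟨m, hm, hmp, hml, hmr⟩ := hmove _ hab
  have ual := a.hlp; have uar := a.hpr; have ubl := b.hlp; have ubr := b.hpr
  have ual' := a.hl; have uar' := a.hr; have ubl' := b.hl; have ubr' := b.hr
  have xl := x.hlp; have xr := x.hpr; have yl := y.hl; have yr := y.hr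
  have yl' := y.hlp; have yr' := y.hpr
  have el := mul_l_spec x y
  have er := mul_r_spec x y
  rw [← e] at el er
  have gl := mul_l_spec x b
  have gr := mul_r_spec x b
  have gp := mul_p x b
  have vl := mul_l_spec a y
  have vr := mul_r_spec a y
  have vp := mul_p a y
  have ep : u.p = x.p + y.p := by rw [e, mul_p]
  refine ⟨x * b, hx, a * y, hy, b.p, a.p, by omega, by omega, by omega, by omega, ?_, ?_⟩
  · intro hg hv
    have : u = x * b * (m * (a * y)) := by
      ext
      · clear er gr vr hmr hr
        refine le_antisymm (le_mul_l (by omega) (le_mul_l (by omega) (by omega))) ?_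
        have w₁ := (mul_l_spec m (a * y)).2.1
        have w₂ := mul_l_spec (x * b) (m * (a * y))
        clear hml
        omega
      · rw [mul_p, mul_p m]; omega
      · clear el gl vl hml hl
        refine le_antisymm ?_ (mul_r_le (by omega) (mul_r_le (by omega) (by omega)))
        have w₁ := (mul_r_spec m (a * y)).2.1
        have w₂ := mul_r_spec (x * b) (m * (a * y))
        clear hmr
        omega
    rw [this]
    exact Γ.mul_mem hg (Γ.mul_mem hm hv)
  · refine ⟨by omega, by omega, by omega, by omega, by omega, by omega, by omega, by omega,
      by omega, by omega⟩

/-- Residue representatives for the value `f` modulo `d`, with bounded width. -/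
theorem exists_residue_rep (P : Set F) (f : F → ℤ) (d : ℤ) (hd : 0 < d) :
    ∃ W : ℤ, 0 ≤ W ∧ ∀ u ∈ P, ∃ e ∈ P, d ∣ f u - f e ∧ e.r - e.l ≤ W := by
  obtain ⟨W, hW, H⟩ := exists_small_rep P (fun u => f u % d)
    ((Set.finite_Icc 0 d).subset (by
      rintro _ ⟨u, -, rfl⟩
      have := Int.emod_nonneg (f u) hd.ne'
      have := Int.emod_lt_of_pos (f u) hd
      simp only [Set.mem_Icc]; omega)) (fun u => u.r - u.l)
    (fun u _ => by have := u.hl; have := u.hr; omega)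
  refine ⟨W, hW, fun u hu => ?_⟩
  obtain ⟨e, he, h1, h2, -⟩ := H u hu
  exact ⟨e, he, Int.dvd_of_emod_eq_zero (Int.emod_eq_emod_iff_emod_sub_eq_zero.1 h1.symm), h2⟩

/-- A wide element that starts and ends far from both ends of its interval is a product of a piece
touching the left end exactly and a piece touching the right end exactly, joined by
displacements inside the interval. Only the residues modulo `d` of the end points matter. -/
theorem mem_of_deep {Γ : Submonoid F} {d N W : ℤ} (hN : 0 ≤ N)
    (hmove : ∀ t, d ∣ t → ∃ m ∈ Γ, m.p = t ∧ (-N ≤ m.l ∨ t - N ≤ m.l) ∧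
    (m.r ≤ N ∨ m.r ≤ t + N))
    {u e f : F} (hup : d ∣ u.p) (hep : d ∣ e.p) (hfp : d ∣ f.p) (he : e ∈ Γ) (hf : f ∈ Γ)
    (hus : DeepStart N u) (hue : DeepEnd N u)
    (heu : d ∣ u.l - e.l) (hfu : d ∣ u.r - f.r)
    (he1 : N ≤ -e.l) (he2 : N ≤ e.p - e.l) (hf1 : N ≤ f.r) (hf2 : N ≤ f.r - f.p)
    (heW : e.r - e.l ≤ W) (hfW : f.r - f.l ≤ W) (hW : W + N ≤ u.r - u.l) : u ∈ Γ := by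
  obtain ⟨m₁, hm₁, p₁, l₁, r₁⟩ := hmove (u.l - e.l) heu
  obtain ⟨m₂, hm₂, p₂, l₂, r₂⟩ := hmove ((u.r - f.r) - (u.l - e.l) - e.p) ((hfu.sub heu).sub hep)
  obtain ⟨m₃, hm₃, p₃, l₃, r₃⟩ := hmove (u.p - (u.r - f.r) - f.p) ((hup.sub hfu).sub hfp)
  obtain ⟨us1, us2⟩ := hus
  obtain ⟨ue1, ue2⟩ := hue
  have := e.hl; have := e.hr; have := e.hlp; have := e.hpr
  have := f.hl; have := f.hr; have := f.hlp; have := f.hpr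
  have : u = m₁ * (e * (m₂ * (f * m₃))) := by
    ext
    · clear r₁ r₂ r₃
      refine le_antisymm (le_mul_l (by omega) (le_mul_l (by omega) (le_mul_l (by omega)
        (le_mul_l (by omega) (by omega))))) ?_
      have w₁ := (mul_l_spec e (m₂ * (f * m₃))).1
      have w₂ := (mul_l_spec m₁ (e * (m₂ * (f * m₃)))).2.1
      omega
    · simp only [mul_p]; omega
    · clear l₁ l₂ l₃
      refine le_antisymm ?_ (mul_r_le (by omega) (mul_r_le (by omega) (mul_r_le (by omega)
        (mul_r_le (by omega) (by omega)))))
      have w₁ := (mul_r_spec f m₃).1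
      have w₂ := (mul_r_spec m₂ (f * m₃)).2.1
      have w₃ := (mul_r_spec e (m₂ * (f * m₃))).2.1
      have w₄ := (mul_r_spec m₁ (e * (m₂ * (f * m₃)))).2.1
      omega
  rw [this]
  exact Γ.mul_mem hm₁ (Γ.mul_mem he (Γ.mul_mem hm₂ (Γ.mul_mem hf hm₃)))

/-- A submonoid of `ℤ` with positive and negative elements is a subgroup `dℤ`. -/
theorem exists_period (M : Submonoid F) (hpos : ∃ u ∈ M, 0 < u.p) (hneg : ∃ u ∈ M, u.p < 0) :
    ∃ d : ℤ, 0 < d ∧ (∀ u ∈ M, d ∣ u.p) ∧ (∃ u ∈ M, u.p = d) ∧ ∃ u ∈ M, u.p = -d := by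
  obtain ⟨g, hg, hg0⟩ := hpos
  obtain ⟨h, hh, hh0⟩ := hneg
  have hpow : ∀ (u : F) (k : ℕ), (u ^ k).p = k * u.p := by
    intro u k
    induction k with
    | zero => simp
    | succ k ih => rw [pow_succ, mul_p, ih]; push_cast; ring
  let H : AddSubgroup ℤ :=
    { carrier := {t | ∃ u ∈ M, u.p = t}
      zero_mem' := ⟨1, M.one_mem, rfl⟩
      add_mem' := by
        rintro _ _ ⟨u, hu, rfl⟩ ⟨v, hv, rfl⟩
        exact ⟨u * v, M.mul_mem hu hv, rfl⟩
      neg_mem' := by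
        rintro _ ⟨u, hu, rfl⟩
        rcases le_total 0 u.p with h0 | h0
        · refine ⟨u ^ (-h.p - 1).toNat * h ^ u.p.toNat,
            M.mul_mem (M.pow_mem hu _) (M.pow_mem hh _), ?_⟩
          rw [mul_p, hpow, hpow, Int.toNat_of_nonneg (by omega), Int.toNat_of_nonneg h0]
          ring
        · refine ⟨u ^ (g.p - 1).toNat * g ^ (-u.p).toNat,
            M.mul_mem (M.pow_mem hu _) (M.pow_mem hg _), ?_⟩
          rw [mul_p, hpow, hpow, Int.toNat_of_nonneg (by omega), Int.toNat_of_nonneg (by omega)]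
          ring }
  obtain ⟨c, hc⟩ := Int.subgroup_cyclic H
  rw [← AddSubgroup.zmultiples_eq_closure] at hc
  have hmem : ∀ t, t ∈ H ↔ c ∣ t := fun t => by rw [hc, Int.mem_zmultiples_iff]
  refine ⟨|c|, abs_pos.2 ?_, fun u hu => (abs_dvd _ _).2 ((hmem _).1 ⟨u, hu, rfl⟩),
    (hmem _).2 ((dvd_abs _ _).2 dvd_rfl), (hmem _).2 ((dvd_neg.2 ((dvd_abs _ _).2 dvd_rfl)))⟩
  rintro rfl
  have : (0 : ℤ) ∣ g.p := (hmem _).1 ⟨g, hg, rfl⟩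
  rw [zero_dvd_iff] at this
  omega

/-- Induction on the width of the interval; the constant `D` is the distance from the start or end
point at which cuts are made, and `W` bounds the width of the generators. -/
theorem fg_of_group (M : Submonoid F) (hM : IsRat (M : Set F)) (hpos : ∃ u ∈ M, 0 < u.p)
    (hneg : ∃ u ∈ M, u.p < 0) : ∃ X : Set F, X.Finite ∧ X ⊆ M ∧ M ≤ starM X := by
  obtain ⟨d, hd, hdM, ⟨u₀, hu₀, hu₀p⟩, v₀, hv₀, hv₀p⟩ := exists_period M hpos hneg
  obtain ⟨N₁, hN₁, hu₀N⟩ := exists_bd u₀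
  obtain ⟨N₂, hN₂, hv₀N⟩ := exists_bd v₀
  obtain ⟨N, hN⟩ : ∃ N, N = N₁ + N₂ := ⟨_, rfl⟩
  have hN0 : 0 ≤ N := by omega
  obtain ⟨C, hC, hcut⟩ := hM.cuts
  obtain ⟨WL, hWL, HL⟩ := exists_residue_rep {u | u ∈ M ∧ N ≤ -u.l ∧ N ≤ u.p - u.l}
    (fun u => u.l) d hd
  obtain ⟨WR, hWR, HR⟩ := exists_residue_rep {u | u ∈ M ∧ N ≤ u.r ∧ N ≤ u.r - u.p}
    (fun u => u.r) d hd
  obtain ⟨D, hD⟩ : ∃ D, D = 2 * N + 10 * C := ⟨_, rfl⟩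
  obtain ⟨W, hW⟩ : ∃ W, W = WL + WR + 10 * D + 10 * N := ⟨_, rfl⟩
  obtain ⟨X, hX⟩ : ∃ X : Set F, X = {u | u ∈ M ∧ u.r - u.l ≤ W} := ⟨_, rfl⟩
  have hXmem : ∀ u ∈ M, u.r - u.l ≤ W → u ∈ starM X := fun u hu hw =>
    subset_starM _ (by rw [hX]; exact ⟨hu, hw⟩)
  refine ⟨X, ?_, by rw [hX]; exact fun u hu => hu.1, ?_⟩
  · refine finite_of_bounds _ (-W) W fun u hu => ?_
    rw [hX] at hu
    have := hu.2; have := u.hl; have := u.hr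
    omega
  have hmove : ∀ t, d ∣ t → ∃ m ∈ starM X, m.p = t ∧ (-N ≤ m.l ∨ t - N ≤ m.l) ∧
    (m.r ≤ N ∨ m.r ≤ t + N) := by
    refine exists_move _ d N hd u₀ v₀ (hXmem _ hu₀ ?_) (hXmem _ hv₀ ?_) hu₀p hv₀p
      (hu₀N.mono (by omega)) (hv₀N.mono (by omega))
    · have := hu₀N.1; have := hu₀N.2; omega
    · have := hv₀N.1; have := hv₀N.2; omega
  -- wide elements, deep at both ends
  have T₁ : ∀ u ∈ M, W < u.r - u.l → DeepStart N u → DeepEnd N u → u ∈ starM X := by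
    intro u hu hw hs he
    obtain ⟨e, ⟨heM, he1, he2⟩, he3, he4⟩ := HL u ⟨hu, hs.1, he.1⟩
    obtain ⟨f, ⟨hfM, hf1, hf2⟩, hf3, hf4⟩ := HR u ⟨hu, hs.2, he.2⟩
    exact mem_of_deep (W := WL + WR) hN0 hmove (hdM u hu) (hdM e heM) (hdM f hfM)
      (hXmem e heM (by omega)) (hXmem f hfM (by omega)) hs he he3 hf3 he1 he2 hf1 hf2
      (by omega) (by omega) (by omega)
  suffices H : ∀ n : ℕ, ∀ u ∈ M, u.r - u.l ≤ n → u ∈ starM X from fun u hu =>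
    H (u.r - u.l).toNat u hu (by omega)
  intro n
  induction n with
  | zero => exact fun u hu hw => hXmem u hu (by push_cast at hw; omega)
  | succ n ih =>
    push_cast
    -- the end point is moved away from the ends of the interval by a cut at a last visit
    have T₂ : ∀ u ∈ M, u.r - u.l ≤ n + 1 → DeepStart N u → u ∈ starM X := by
      intro u hu hw hs
      by_cases hWu : u.r - u.l ≤ W
      · exact hXmem u hu hWu
      have := u.hlp; have := u.hpr; have := u.hl; have := u.hr
      by_cases hl : u.p - u.l < N
      · obtain ⟨x, y, hsp, hy1, hy2⟩ := (hcut u hu D (by omega)).2.2.1 (by omega)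
        have ep : u.p = x.p + y.p := by rw [hsp.1, mul_p]
        have el : u.l ≤ x.p + y.l := by rw [hsp.1, mul_l]; omega
        have := y.hr
        obtain ⟨g, hg, v, hv, c, c', h1, h2, h3, h4, hglue, k1, k2, k3, k4, k5, k6, k7, k8, k9,
          k10⟩ := hsp.glue hN0 hdM hmove hu (by omega) (by omega)
        refine hglue ?_ (hXmem v hv (by omega))
        by_cases hgw : g.r - g.l ≤ n
        · exact ih g hg hgw
        · exact T₁ g hg (by omega) ⟨by have := hs.1; omega, by have := hs.2; omega⟩
            ⟨by omega, by omega⟩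
      by_cases hr : u.r - u.p < N
      · obtain ⟨x, y, hsp, hy1, hy2⟩ := (hcut u hu D (by omega)).2.2.2 (by omega)
        have ep : u.p = x.p + y.p := by rw [hsp.1, mul_p]
        have er : x.p + y.r ≤ u.r := by rw [hsp.1, mul_r]; omega
        have := y.hl
        obtain ⟨g, hg, v, hv, c, c', h1, h2, h3, h4, hglue, k1, k2, k3, k4, k5, k6, k7, k8, k9,
          k10⟩ := hsp.glue hN0 hdM hmove hu (by omega) (by omega)
        refine hglue ?_ (hXmem v hv (by omega))
        by_cases hgw : g.r - g.l ≤ n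
        · exact ih g hg hgw
        · exact T₁ g hg (by omega) ⟨by have := hs.1; omega, by have := hs.2; omega⟩
            ⟨by omega, by omega⟩
      exact T₁ u hu (by omega) hs ⟨by omega, by omega⟩
    -- the starting point is moved away from the ends of the interval by a cut at a first visit
    intro u hu hw
    by_cases hWu : u.r - u.l ≤ W
    · exact hXmem u hu hWu
    have := u.hlp; have := u.hpr; have := u.hl; have := u.hr
    by_cases hl : -u.l < N
    · obtain ⟨x, y, hsp, hx1, hx2⟩ := (hcut u hu D (by omega)).1 (by omega)
      have := x.hpr
      obtain ⟨g, hg, v, hv, c, c', h1, h2, h3, h4, hglue, k1, k2, k3, k4, k5, k6, k7, k8, k9,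
        k10⟩ := hsp.glue hN0 hdM hmove hu (by omega) (by omega)
      refine hglue (hXmem g hg (by omega)) ?_
      by_cases hvw : v.r - v.l ≤ n
      · exact ih v hv hvw
      · exact T₂ v hv (by omega) ⟨by omega, by omega⟩
    by_cases hr : u.r < N
    · obtain ⟨x, y, hsp, hx1, hx2⟩ := (hcut u hu D (by omega)).2.1 (by omega)
      have := x.hlp
      obtain ⟨g, hg, v, hv, c, c', h1, h2, h3, h4, hglue, k1, k2, k3, k4, k5, k6, k7, k8, k9,
        k10⟩ := hsp.glue hN0 hdM hmove hu (by omega) (by omega)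
      refine hglue (hXmem g hg (by omega)) ?_
      by_cases hvw : v.r - v.l ≤ n
      · exact ih v hv hvw
      · exact T₂ v hv (by omega) ⟨by omega, by omega⟩
    exact T₂ u hu hw ⟨by omega, by omega⟩

theorem fg_of_isRat (M : Submonoid F) (hM : IsRat (M : Set F)) :
    ∃ X : Set F, X.Finite ∧ X ⊆ M ∧ M ≤ starM X := by
  by_cases hneg : ∃ u ∈ M, u.p < 0
  · by_cases hpos : ∃ u ∈ M, 0 < u.p
    · exact fg_of_group M hM hpos hneg
    · -- the projection is nonpositive: pass to the reflected submonoid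
      push Not at hpos
      obtain ⟨X, hXf, hXM, hX⟩ := fg_of_nonneg (M.map refl)
        (by rw [Submonoid.coe_map]; exact hM.image_refl) (by
          rintro _ ⟨u, hu, rfl⟩
          have := hpos u hu
          simp; omega)
      refine ⟨refl '' X, hXf.image _, ?_, ?_⟩
      · rintro _ ⟨x, hx, rfl⟩
        obtain ⟨u, hu, rfl⟩ := hXM hx
        rw [refl_refl]; exact hu
      · intro u hu
        have h1 : starM X ≤ (starM (refl '' X)).comap refl :=
          starM_le fun x hx => subset_starM _ ⟨x, hx, rfl⟩
        have h2 := h1 (hX ⟨u, hu, rfl⟩)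
        rw [Submonoid.mem_comap, refl_refl] at h2
        exact h2
  · push Not at hneg
    exact fg_of_nonneg M hM hneg

end F

/-- Every rational submonoid `M` of `F` is finitely generated: there is
a finite `X ⊆ M` with `M = X* = ⋃_{k≥0} X^k`, the submonoid of `F` generated by `X`. -/
theorem rational_submonoid_finitely_generated (M : Set F) (hrat : F.IsRat M)
    (hone : (1 : F) ∈ M) (hmul : ∀ x ∈ M, ∀ y ∈ M, x * y ∈ M) :
    ∃ X : Finset F, (X : Set F) ⊆ M ∧ M = ⋃ k : ℕ, (X : Set F) ^ k := by
  let M' : Submonoid F :=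
    { carrier := M, one_mem' := hone, mul_mem' := fun hx hy => hmul _ hx _ hy }
  obtain ⟨X, hXf, hXM, hX⟩ := F.fg_of_isRat M' hrat
  refine ⟨hXf.toFinset, by rw [Set.Finite.coe_toFinset]; exact hXM, ?_⟩
  rw [Set.Finite.coe_toFinset, ← F.coe_starM]
  exact Set.Subset.antisymm hX (F.starM_le hXM)
end

section
/- For a subset L ⊆ F the following are equivalent: (i) L is a rational subset of F; (ii) L is a finite union of subsets of the form u₀·X₁*·u₁·X₂*·u₂ ⋯ Xₙ*·uₙ, where n ∈ ℕ, u₀, …, uₙ ∈ F and X₁, …, Xₙ are finite subsets of F (here X* = ⋃_{k≥0} X^k and the product of subsets is setwise). -/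
/-!
An element `s` of `F` is a walk on `ℤ` starting at `0`, recorded by its minimum, endpoint and
maximum. Call a finite union of monomials `u₀ X₁* u₁ ⋯ Xₙ* uₙ` a polynomial. Polynomials contain
the finite sets and are closed under union and product, so the point is that `L*` is a polynomial
whenever `L` is (`F.IsPoly.star`).

Say that `t` dominates `s` if both have the same endpoint and the range of `t` is contained in that
of `s`. Suppose a polynomial `T ⊆ L*` dominates `L*`. In a product of elements of `L`, keep one
factor in which the minimum is attained and one in which the maximum is attained; replacing the
remaining stretches by dominating elements of `T` does not change the product. Hence
`L* = 1 ∪ TLT ∪ TLTLT` is a polynomial.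

To find `T` (`F.exists_dominating`), note first that every displacement `d` occurring in `L*` is
realized by some `b c^k ∈ L*` whose range exceeds the interval between `0` and `d` by at most a
constant `K`, with `(b, c)` from a finite list: take `c` of positive (or negative) displacement `P`,
and for each residue class modulo `P` a `b` of least displacement in that direction
(`F.exists_core`). Now consider a walk with steps in `L`, of range `[l, r]`. If some intermediate
heights are at distance more than `K` from both `l` and `r`, the stretch between the first and the
last of them can be replaced by such a `b c^k` without leaving `[l, r]`. The remaining stretches
only visit heights within `K` of the boundary; there are boundedly many of these, so after removing
loops (`F.short_of_reach`) such a stretch is a product of boundedly many elements of `L`.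
-/

open Pointwise

/-- The star `X* = ⋃_{k≥0} X^k` of a subset of `F` (setwise powers). -/
def star (S : Set F) : Set F := ⋃ k : ℕ, S ^ k

namespace F

/-! ### Finite unions of monomials -/

/-- Monomials `u₀ X₁* u₁ ⋯ Xₙ* uₙ` with all `Xᵢ` finite, built from right to left. -/
inductive IsMonomial : Set F → Prop
  | point (u : F) : IsMonomial {u}
  | cons (u : F) (X S : Set F) : X.Finite → IsMonomial S →
      IsMonomial ({u} * (_root_.star X * S))

/-- Polynomials: finite unions of monomials. -/
def IsPoly (L : Set F) : Prop :=
  ∃ 𝒮 : Set (Set F), 𝒮.Finite ∧ (∀ S ∈ 𝒮, IsMonomial S) ∧ L = ⋃₀ 𝒮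

theorem IsMonomial.singleton_mul (u : F) {S : Set F} (hS : IsMonomial S) :
    IsMonomial ({u} * S) := by
  cases hS with
  | point v => rw [Set.singleton_mul_singleton]; exact .point _
  | cons v X S hX hS =>
    rw [← mul_assoc, Set.singleton_mul_singleton]; exact .cons _ _ _ hX hS

theorem IsMonomial.mul {S T : Set F} (hS : IsMonomial S) (hT : IsMonomial T) :
    IsMonomial (S * T) := by
  induction hS with
  | point u => exact hT.singleton_mul u
  | cons u X S hX hS ih =>
    rw [mul_assoc, mul_assoc]; exact .cons _ _ _ hX ih

theorem IsMonomial.isPoly {S : Set F} (hS : IsMonomial S) : IsPoly S :=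
  ⟨{S}, Set.finite_singleton _, by simpa using hS, by simp⟩

theorem IsPoly.union {S T : Set F} (hS : IsPoly S) (hT : IsPoly T) : IsPoly (S ∪ T) := by
  obtain ⟨A, hA, hA', rfl⟩ := hS
  obtain ⟨B, hB, hB', rfl⟩ := hT
  refine ⟨A ∪ B, hA.union hB, ?_, Set.sUnion_union A B |>.symm⟩
  rintro S (h | h)
  exacts [hA' S h, hB' S h]

theorem isPoly_empty : IsPoly ∅ := ⟨∅, Set.finite_empty, by simp, by simp⟩

theorem IsPoly.biUnion {ι : Type*} (s : Finset ι) {f : ι → Set F}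
    (h : ∀ i ∈ s, IsPoly (f i)) : IsPoly (⋃ i ∈ s, f i) := by
  classical
  induction s using Finset.induction_on with
  | empty => simpa using isPoly_empty
  | insert i s _ ih =>
    rw [Finset.set_biUnion_insert]
    exact (h i (by simp)).union (ih fun j hj => h j (by simp [hj]))

theorem isPoly_of_finite {S : Set F} (hS : S.Finite) : IsPoly S := by
  have := IsPoly.biUnion hS.toFinset (f := fun u => {u}) fun u _ => (IsMonomial.point u).isPoly
  simpa using this

theorem IsPoly.mul {S T : Set F} (hS : IsPoly S) (hT : IsPoly T) : IsPoly (S * T) := by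
  obtain ⟨A, hA, hA', rfl⟩ := hS
  obtain ⟨B, hB, hB', rfl⟩ := hT
  refine ⟨Set.image2 (· * ·) A B, hA.image2 _ hB, ?_, ?_⟩
  · rintro _ ⟨S, hS, T, hT, rfl⟩
    exact (hA' S hS).mul (hB' T hT)
  · ext w
    simp only [Set.mem_mul, Set.mem_sUnion, Set.mem_image2]
    constructor
    · rintro ⟨x, ⟨S, hS, hx⟩, y, ⟨T, hT, hy⟩, rfl⟩
      exact ⟨S * T, ⟨S, hS, T, hT, rfl⟩, Set.mul_mem_mul hx hy⟩
    · rintro ⟨_, ⟨S, hS, T, hT, rfl⟩, x, hx, y, hy, rfl⟩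
      exact ⟨x, ⟨S, hS, hx⟩, y, ⟨T, hT, hy⟩, rfl⟩

theorem isPoly_one : IsPoly 1 := isPoly_of_finite (Set.finite_singleton _)

theorem IsPoly.pow {S : Set F} (hS : IsPoly S) (n : ℕ) : IsPoly (S ^ n) := by
  induction n with
  | zero => rw [pow_zero]; exact isPoly_one
  | succ n ih => rw [pow_succ]; exact ih.mul hS

theorem isPoly_mul_star (b c : F) : IsPoly ({b} * _root_.star {c}) := by
  have := (IsMonomial.cons b {c} {1} (Set.finite_singleton _) (.point 1)).isPoly
  rwa [Set.singleton_one, mul_one] at this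

theorem star_eq_closure (S : Set F) : _root_.star S = (Submonoid.closure S : Set F) := by
  unfold _root_.star
  apply Set.Subset.antisymm
  · refine Set.iUnion_subset fun k => ?_
    induction k with
    | zero => rw [pow_zero, Set.one_subset]; exact one_mem _
    | succ k ih =>
      rw [pow_succ]
      rintro _ ⟨x, hx, y, hy, rfl⟩
      exact mul_mem (ih hx) (Submonoid.subset_closure hy)
  · intro w hw
    induction hw using Submonoid.closure_induction with
    | mem x hx => exact Set.mem_iUnion.2 ⟨1, by simpa using hx⟩
    | one => exact Set.mem_iUnion.2 ⟨0, by simp⟩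
    | mul x y _ _ hx hy =>
      obtain ⟨m, hm⟩ := Set.mem_iUnion.1 hx
      obtain ⟨n, hn⟩ := Set.mem_iUnion.1 hy
      exact Set.mem_iUnion.2 ⟨m + n, by rw [pow_add]; exact Set.mul_mem_mul hm hn⟩

/-! ### Realizing displacements with bounded overshoot -/

theorem pow_bounds (e : ℤ) (he : e = 1 ∨ e = -1) (c : F) (hc : 0 < e * c.p) (k : ℕ) :
    0 ≤ e * (c ^ k).p ∧ (c ^ k).p = k * c.p ∧
      min 0 (c ^ k).p + c.l ≤ (c ^ k).l ∧ (c ^ k).r ≤ max 0 (c ^ k).p + c.r := by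
  induction k with
  | zero => have := c.hl; have := c.hr; simp; omega
  | succ k ih =>
    obtain ⟨h1, h2, h3, h4⟩ := ih
    simp only [pow_succ, mul_l, mul_p, mul_r]
    push_cast
    refine ⟨?_, by rw [h2]; ring, ?_, ?_⟩ <;> rcases he with rfl | rfl <;> omega

/-- In direction `e = ±1` and a fixed residue class of displacements modulo that of `c`, all
displacements of `M` are realized by `b * c ^ k`, where `b` has the least displacement in the
class; the overshoot is bounded by the sizes of `b` and `c`. -/
theorem exists_core_residue (M : Submonoid F) (e : ℤ) (he : e = 1 ∨ e = -1) (c : F) (hcM : c ∈ M)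
    (hc : 0 < e * c.p) (ρ : ℕ) :
    ∃ T : Set F, T ⊆ M ∧ IsPoly T ∧ ∃ K : ℕ, ∀ s ∈ M, 0 ≤ e * s.p →
      e * s.p % (e * c.p) = ρ → ∃ t ∈ T, t.p = s.p ∧ min 0 s.p - K ≤ t.l ∧
        t.r ≤ max 0 s.p + K := by
  classical
  by_cases H : ∃ n : ℕ, ∃ b ∈ M, e * b.p = n ∧ e * b.p % (e * c.p) = ρ
  swap
  · refine ⟨∅, by simp, isPoly_empty, 0, fun s hs h0 h1 => ?_⟩
    exact absurd ⟨(e * s.p).toNat, s, hs, by omega, h1⟩ H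
  obtain ⟨b, hb, hbn, hbr⟩ := Nat.find_spec H
  have hmin : ∀ s ∈ M, 0 ≤ e * s.p → e * s.p % (e * c.p) = ρ → e * b.p ≤ e * s.p := by
    intro s hs h0 h1
    have := Nat.find_min' H ⟨s, hs, (Int.toNat_of_nonneg h0).symm, h1⟩
    omega
  refine ⟨{b} * _root_.star {c}, ?_, isPoly_mul_star b c, (b.r - b.l + c.r - c.l).toNat, ?_⟩
  · rw [star_eq_closure]
    rintro _ ⟨x, rfl, y, hy, rfl⟩
    exact mul_mem hb ((Submonoid.closure_le.2 (by simpa using hcM)) hy)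
  · intro s hs h0 h1
    have hle := hmin s hs h0 h1
    have hdvd : e * c.p ∣ e * s.p - e * b.p :=
      Int.dvd_of_emod_eq_zero (Int.emod_eq_emod_iff_emod_sub_eq_zero.1 (h1.trans hbr.symm))
    obtain ⟨q, hq⟩ := hdvd
    have hq0 : 0 ≤ q := by
      by_contra h
      have : e * c.p * q < 0 := mul_neg_of_pos_of_neg hc (by omega)
      omega
    lift q to ℕ using hq0
    obtain ⟨g1, g2, g3, g4⟩ := pow_bounds e he c hc q
    refine ⟨b * c ^ q, Set.mul_mem_mul rfl (Set.mem_iUnion.2 ⟨q, ?_⟩), ?_⟩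
    · simp
    have hp : e * (c ^ q).p = e * s.p - e * b.p := by rw [hq, g2]; ring
    have := b.hl; have := b.hr; have := c.hl; have := c.hr
    have := b.hlp; have := b.hpr
    simp only [mul_l, mul_p, mul_r]
    rcases he with rfl | rfl <;> refine ⟨?_, ?_, ?_⟩ <;> omega

theorem exists_core_signed (M : Submonoid F) (e : ℤ) (he : e = 1 ∨ e = -1) :
    ∃ T : Set F, T ⊆ M ∧ IsPoly T ∧ ∃ K : ℕ, ∀ s ∈ M, 0 ≤ e * s.p →
      ∃ t ∈ T, t.p = s.p ∧ min 0 s.p - K ≤ t.l ∧ t.r ≤ max 0 s.p + K := by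
  by_cases H : ∃ c ∈ M, 0 < e * c.p
  swap
  · refine ⟨1, by simp, isPoly_one, 0, fun s hs h0 => ⟨1, rfl, ?_⟩⟩
    have : ¬ 0 < e * s.p := fun h => H ⟨s, hs, h⟩
    simp only [one_p, one_l, one_r]
    rcases he with rfl | rfl <;> omega
  obtain ⟨c, hcM, hc⟩ := H
  choose T hTM hT K hK using exists_core_residue M e he c hcM hc
  refine ⟨⋃ ρ ∈ Finset.range (e * c.p).toNat, T ρ, ?_, IsPoly.biUnion _ fun ρ _ => hT ρ,
    ∑ ρ ∈ Finset.range (e * c.p).toNat, K ρ, ?_⟩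
  · exact Set.iUnion₂_subset fun ρ _ => hTM ρ
  · intro s hs h0
    have h1 := Int.emod_nonneg (e * s.p) hc.ne'
    have h2 := Int.emod_lt_of_pos (e * s.p) hc
    obtain ⟨t, ht, h3, h4, h5⟩ :=
      hK (e * s.p % (e * c.p)).toNat s hs h0 (Int.toNat_of_nonneg h1).symm
    have hmem : (e * s.p % (e * c.p)).toNat ∈ Finset.range (e * c.p).toNat := by
      rw [Finset.mem_range]; omega
    have h6 := Finset.single_le_sum (f := K) (fun _ _ => Nat.zero_le _) hmem
    refine ⟨t, Set.mem_biUnion hmem ht, h3, ?_, ?_⟩ <;> omega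

/-- Every displacement `d` of a submonoid `M` is realized within the interval spanned by `0` and
`d`, up to a uniform error `K`, by an element of a polynomial contained in `M`. -/
theorem exists_core (M : Submonoid F) :
    ∃ T : Set F, T ⊆ M ∧ IsPoly T ∧ ∃ K : ℕ, ∀ s ∈ M,
      ∃ t ∈ T, t.p = s.p ∧ min 0 s.p - K ≤ t.l ∧ t.r ≤ max 0 s.p + K := by
  obtain ⟨T, hTM, hT, K, hK⟩ := exists_core_signed M 1 (.inl rfl)
  obtain ⟨T', hTM', hT', K', hK'⟩ := exists_core_signed M (-1) (.inr rfl)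
  refine ⟨T ∪ T', Set.union_subset hTM hTM', hT.union hT', K + K', fun s hs => ?_⟩
  rcases le_total 0 s.p with h | h
  · obtain ⟨t, ht, h1, h2, h3⟩ := hK s hs (by omega)
    exact ⟨t, .inl ht, h1, by omega, by omega⟩
  · obtain ⟨t, ht, h1, h2, h3⟩ := hK' s hs (by omega)
    exact ⟨t, .inr ht, h1, by omega, by omega⟩

/-! ### Walks in a strip -/

/-- The walk `s`, started at height `x`, ends at height `y` and stays in the strip `[l, r]`. -/
def Fits (l r x : ℤ) (s : F) (y : ℤ) : Prop :=
  y = x + s.p ∧ l ≤ x + s.l ∧ x + s.r ≤ r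

theorem Fits.mul {l r x y z : ℤ} {s t : F} (h : Fits l r x s y) (h' : Fits l r y t z) :
    Fits l r x (s * t) z := by
  obtain ⟨rfl, h1, h2⟩ := h
  obtain ⟨rfl, h3, h4⟩ := h'
  refine ⟨?_, ?_, ?_⟩ <;> simp only [mul_l, mul_p, mul_r] <;> omega

theorem fits_one {l r x : ℤ} (hl : l ≤ x) (hr : x ≤ r) : Fits l r x 1 x := by
  refine ⟨?_, ?_, ?_⟩ <;> simp <;> omega

theorem Fits.mem_left {l r x y : ℤ} {s : F} (h : Fits l r x s y) : l ≤ x ∧ x ≤ r := by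
  obtain ⟨rfl, h1, h2⟩ := h
  have := s.hl; have := s.hr
  omega

theorem Fits.mem_right {l r x y : ℤ} {s : F} (h : Fits l r x s y) : l ≤ y ∧ y ≤ r := by
  obtain ⟨rfl, h1, h2⟩ := h
  have := s.hlp; have := s.hpr
  omega

/-- One step inside the strip `[l, r]` by an element of `L`. -/
def Step (L : Set F) (l r x y : ℤ) : Prop := ∃ u ∈ L, Fits l r x u y

open Relation

theorem reach_of_fits {L : Set F} {l r x : ℤ} {s : F} (hs : s ∈ Submonoid.closure L) :
    ∀ {y : ℤ}, Fits l r x s y → ReflTransGen (Step L l r) x y := by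
  induction hs using Submonoid.closure_induction_right with
  | one => rintro y ⟨rfl, -, -⟩; simpa using ReflTransGen.refl
  | mul_right s _ u hu ih =>
    rintro y ⟨rfl, h1, h2⟩
    simp only [mul_l, mul_p, mul_r] at *
    exact (ih ⟨rfl, by omega, by omega⟩).tail ⟨u, hu, by omega, by omega, by omega⟩

theorem fits_of_reach {L : Set F} {l r x y : ℤ} (hl : l ≤ x) (hr : x ≤ r)
    (h : ReflTransGen (Step L l r) x y) : ∃ s ∈ Submonoid.closure L, Fits l r x s y := by
  induction h with
  | refl => exact ⟨1, one_mem _, fits_one hl hr⟩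
  | tail _ h ih =>
    obtain ⟨s, hs, hf⟩ := ih
    obtain ⟨u, hu, hf'⟩ := h
    exact ⟨s * u, mul_mem hs (Submonoid.subset_closure hu), hf.mul hf'⟩

/-- A path leaves its starting point for a last time. -/
theorem last_departure {α : Type*} {R : α → α → Prop} {x y : α} (h : ReflTransGen R x y) :
    x = y ∨ ∃ z, R x z ∧ ReflTransGen (fun a b => a ≠ x ∧ R a b) z y := by
  induction h with
  | refl => exact .inl rfl
  | @tail b c _ hbc ih =>
    right
    by_cases hb : b = x
    · subst hb; exact ⟨c, hbc, .refl⟩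
    · rcases ih with rfl | ⟨z, hz, hz'⟩
      · exact absurd rfl hb
      · exact ⟨z, hz, hz'.tail ⟨hb, hbc⟩⟩

/-- Loop removal: a walk that only departs from heights in `Z` can be replaced by one of at most
`Z.card` steps. The factor `1` in `1 ∪ L` pads it to exactly `n` steps. -/
theorem short_of_reach {L : Set F} {l r : ℤ} (n : ℕ) : ∀ (Z : Finset ℤ), Z.card ≤ n →
    ∀ {x y : ℤ}, l ≤ x → x ≤ r →
    ReflTransGen (fun a b => a ∈ Z ∧ Step L l r a b) x y →
    ∃ s ∈ (1 ∪ L) ^ n, Fits l r x s y := by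
  induction n with
  | zero =>
    intro Z hZ x y hl hr h
    rcases last_departure h with rfl | ⟨z, ⟨hx, -⟩, -⟩
    · exact ⟨1, by simp, fits_one hl hr⟩
    · rw [Finset.card_eq_zero.1 (Nat.le_zero.1 hZ)] at hx
      simp at hx
  | succ n ih =>
    intro Z hZ x y hl hr h
    rcases last_departure h with rfl | ⟨z, ⟨hx, u, hu, hf⟩, h'⟩
    · exact ⟨1, Set.one_mem_pow (.inl rfl), fits_one hl hr⟩
    · have hcard : (Z.erase x).card ≤ n := by
        rw [Finset.card_erase_of_mem hx]; omega
      obtain ⟨s, hs, hf'⟩ := ih (Z.erase x) hcard hf.mem_right.1 hf.mem_right.2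
        (ReflTransGen.mono (fun a b hab => ⟨Finset.mem_erase.2 ⟨hab.1, hab.2.1⟩, hab.2.2⟩) _ _ h')
      exact ⟨u * s, by rw [pow_succ']; exact Set.mul_mem_mul (.inr hu) hs, hf.mul hf'⟩

/-- A path either departs only from points of `Z`, or it splits at its first and its last
departure from a point outside `Z`. -/
theorem split_path {α : Type*} [DecidableEq α] {R : α → α → Prop} (Z : Finset α) {x y : α}
    (h : ReflTransGen R x y) :
    ReflTransGen (fun a b => a ∈ Z ∧ R a b) x y ∨
    ∃ m m', m ∉ Z ∧ m' ∉ Z ∧ ReflTransGen (fun a b => a ∈ Z ∧ R a b) x m ∧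
      ReflTransGen R m m' ∧ ReflTransGen (fun a b => a ∈ insert m' Z ∧ R a b) m' y := by
  induction h with
  | refl => exact .inl .refl
  | @tail b c _ hbc ih =>
    rcases ih with ih | ⟨m, m', hm, hm', h1, h2, h3⟩
    · by_cases hb : b ∈ Z
      · exact .inl (ih.tail ⟨hb, hbc⟩)
      · exact .inr ⟨b, b, hb, hb, ih, .refl, .single ⟨by simp, hbc⟩⟩
    · right
      by_cases hb : b ∈ insert m' Z
      · exact ⟨m, m', hm, hm', h1, h2, h3.tail ⟨hb, hbc⟩⟩
      · exact ⟨m, b, hm, fun h => hb (by simp [h]), h1,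
          h2.trans (ReflTransGen.mono (fun _ _ h => h.2) _ _ h3), .single ⟨by simp, hbc⟩⟩

/-- `t` dominates `s`: same displacement, and the range of `t` is contained in that of `s`. This is
the natural partial order `s ≤ t` of the inverse monoid `F`. -/
def Dominates (t s : F) : Prop := t.p = s.p ∧ s.l ≤ t.l ∧ t.r ≤ s.r

theorem Dominates.refl (s : F) : Dominates s s := ⟨rfl, le_rfl, le_rfl⟩

theorem Dominates.mul {s s' t t' : F} (h : Dominates s' s) (h' : Dominates t' t) :
    Dominates (s' * t') (s * t) := by
  obtain ⟨h1, h2, h3⟩ := h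
  obtain ⟨h4, h5, h6⟩ := h'
  refine ⟨?_, ?_, ?_⟩ <;> simp only [mul_l, mul_p, mul_r] <;> omega

/-- An element dominating `w` equals `w` once it still attains the minimum and the maximum. -/
theorem Dominates.eq {w t : F} (h : Dominates t w) {a u b a' v b' : F} (e : t = a * u * b)
    (hl : w.l = a.p + u.l) (e' : t = a' * v * b') (hr : w.r = a'.p + v.r) : w = t := by
  obtain ⟨h1, h2, h3⟩ := h
  have hl' : t.l ≤ a.p + u.l := by
    rw [e]; simp only [mul_l]; omega
  have hr' : a'.p + v.r ≤ t.r := by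
    rw [e']; simp only [mul_r]; omega
  ext <;> omega

/-- `L*` contains a polynomial which dominates it. -/
theorem exists_dominating {L : Set F} (hL : IsPoly L) :
    ∃ T : Set F, T ⊆ Submonoid.closure L ∧ IsPoly T ∧
      ∀ s ∈ Submonoid.closure L, ∃ t ∈ T, Dominates t s := by
  obtain ⟨T, hTM, hT, K, hK⟩ := exists_core (Submonoid.closure L)
  -- The boundary zones below have `K + 1` heights each, and one more height may be inserted.
  set n := 2 * K + 3 with hn
  have hA : IsPoly ((1 ∪ L) ^ n) := (isPoly_one.union hL).pow n
  have hAM : (1 ∪ L) ^ n ⊆ (Submonoid.closure L : Set F) := by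
    have h1 : (1 ∪ L : Set F) ⊆ (Submonoid.closure L : Set F) :=
      Set.union_subset (by simp) Submonoid.subset_closure
    generalize n = k
    induction k with
    | zero => simp
    | succ k ih =>
      rw [pow_succ]
      rintro _ ⟨x, hx, y, hy, rfl⟩
      exact mul_mem (ih hx) (h1 hy)
  refine ⟨(1 ∪ L) ^ n ∪ (1 ∪ L) ^ n * T * (1 ∪ L) ^ n, ?_, hA.union ((hA.mul hT).mul hA), ?_⟩
  · refine Set.union_subset hAM ?_
    rintro _ ⟨_, ⟨x, hx, y, hy, rfl⟩, z, hz, rfl⟩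
    exact mul_mem (mul_mem (hAM hx) (hTM hy)) (hAM hz)
  intro s hs
  have hfs : Fits s.l s.r 0 s s.p := ⟨by omega, by omega, by omega⟩
  suffices h : ∃ t ∈ (1 ∪ L) ^ n ∪ (1 ∪ L) ^ n * T * (1 ∪ L) ^ n, Fits s.l s.r 0 t s.p by
    obtain ⟨t, ht, h1, h2, h3⟩ := h
    exact ⟨t, ht, by omega, by omega, by omega⟩
  set Z : Finset ℤ := Finset.Icc s.l (s.l + K) ∪ Finset.Icc (s.r - K) s.r with hZdef
  have hZ : Z.card ≤ 2 * K + 2 := by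
    refine (Finset.card_union_le _ _).trans ?_
    rw [Int.card_Icc, Int.card_Icc]
    omega
  have hmid : ∀ m, s.l ≤ m → m ≤ s.r → m ∉ Z → s.l + K < m ∧ m < s.r - K := by
    intro m h1 h2 h3
    simp only [hZdef, Finset.mem_union, Finset.mem_Icc, not_or] at h3
    omega
  rcases split_path Z (reach_of_fits hs hfs) with h | ⟨m, m', hm, hm', h1, h2, h3⟩
  · obtain ⟨t, ht, hf⟩ := short_of_reach n Z (by omega) s.hl s.hr h
    exact ⟨t, .inl ht, hf⟩
  · obtain ⟨t₁, ht₁, hf₁⟩ := short_of_reach n Z (by omega) s.hl s.hr h1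
    have hm1 := hmid m hf₁.mem_right.1 hf₁.mem_right.2 hm
    obtain ⟨w, hw, hfw⟩ := fits_of_reach hf₁.mem_right.1 hf₁.mem_right.2 h2
    have hm2 := hmid m' hfw.mem_right.1 hfw.mem_right.2 hm'
    obtain ⟨t₃, ht₃, hf₃⟩ := short_of_reach n (insert m' Z)
      ((Finset.card_insert_le _ _).trans (by omega)) hfw.mem_right.1 hfw.mem_right.2 h3
    obtain ⟨t₂, ht₂, g1, g2, g3⟩ := hK w hw
    have hf₂ : Fits s.l s.r m t₂ m' := by
      have := hfw.1
      exact ⟨by omega, by omega, by omega⟩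
    exact ⟨t₁ * t₂ * t₃, .inr (Set.mul_mem_mul (Set.mul_mem_mul ht₁ ht₂) ht₃),
      (hf₁.mul hf₂).mul hf₃⟩

/-! ### Closure under star -/

/-- The minimum of a nontrivial walk is attained inside one of its factors. -/
theorem split_min {L : Set F} {w : F} (hw : w ∈ Submonoid.closure L) :
    w = 1 ∨ ∃ s ∈ Submonoid.closure L, ∃ u ∈ L, ∃ z ∈ Submonoid.closure L,
      w = s * u * z ∧ w.l = s.p + u.l := by
  induction hw using Submonoid.closure_induction_right with
  | one => exact .inl rfl
  | mul_right w hwM x hx ih =>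
    right
    by_cases h : w.p + x.l ≤ w.l
    · exact ⟨w, hwM, x, hx, 1, one_mem _, by simp, by simp only [mul_l]; omega⟩
    rcases ih with rfl | ⟨s, hs, u, hu, z, hz, e, hl⟩
    · have := x.hl
      simp only [one_l, one_p] at h
      omega
    · refine ⟨s, hs, u, hu, z * x, mul_mem hz (Submonoid.subset_closure hx), ?_, ?_⟩
      · rw [e, mul_assoc (s * u)]
      · simp only [mul_l]; omega

theorem split_max {L : Set F} {w : F} (hw : w ∈ Submonoid.closure L) :
    w = 1 ∨ ∃ s ∈ Submonoid.closure L, ∃ u ∈ L, ∃ z ∈ Submonoid.closure L,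
      w = s * u * z ∧ w.r = s.p + u.r := by
  induction hw using Submonoid.closure_induction_right with
  | one => exact .inl rfl
  | mul_right w hwM x hx ih =>
    right
    by_cases h : w.r ≤ w.p + x.r
    · exact ⟨w, hwM, x, hx, 1, one_mem _, by simp, by simp only [mul_r]; omega⟩
    rcases ih with rfl | ⟨s, hs, u, hu, z, hz, e, hl⟩
    · have := x.hr
      simp only [one_r, one_p] at h
      omega
    · refine ⟨s, hs, u, hu, z * x, mul_mem hz (Submonoid.subset_closure hx), ?_, ?_⟩
      · rw [e, mul_assoc (s * u)]
      · simp only [mul_r]; omega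

/-- With `T ⊆ L*` dominating `L*`, one has `L* = 1 ∪ TLT ∪ TLTLT`: keep the factors in which the
minimum and the maximum of the walk are attained, and replace the rest by elements of `T`. -/
theorem IsPoly.star {L : Set F} (hL : IsPoly L) : IsPoly (_root_.star L) := by
  obtain ⟨T, hTM, hT, hdom⟩ := exists_dominating hL
  have hLM : L ⊆ (Submonoid.closure L : Set F) := Submonoid.subset_closure
  have key : _root_.star L = 1 ∪ (T * L * T ∪ T * L * T * L * T) := by
    rw [star_eq_closure]
    apply Set.Subset.antisymm
    · intro w hw
      rcases split_min hw with rfl | ⟨s, hs, u, hu, z, hz, e, hl⟩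
      · exact .inl rfl
      right
      -- The maximum lies in `u`, or strictly before it, or strictly after it.
      by_cases hu' : w.r = s.p + u.r
      · left
        obtain ⟨s', hs', hs'w⟩ := hdom s hs
        obtain ⟨z', hz', hz'w⟩ := hdom z hz
        have : w = s' * u * z' :=
          (e ▸ (hs'w.mul (.refl u)).mul hz'w : Dominates (s' * u * z') w).eq rfl
            (by rw [hl, hs'w.1]) rfl (by rw [hu', hs'w.1])
        rw [this]
        exact Set.mul_mem_mul (Set.mul_mem_mul hs' hu) hz'
      right
      by_cases hs1 : w.r = s.r
      · rcases split_max hs with rfl | ⟨x, hx, v, hv, y, hy, e', hr⟩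
        · have := u.hr
          subst e
          simp only [mul_l, mul_p, mul_r, one_l, one_p, one_r] at *
          omega
        obtain ⟨x', hx', hx'w⟩ := hdom x hx
        obtain ⟨y', hy', hy'w⟩ := hdom y hy
        obtain ⟨z', hz', hz'w⟩ := hdom z hz
        have hd : Dominates (x' * v * y') s := e' ▸ (hx'w.mul (.refl v)).mul hy'w
        have hdw : Dominates (x' * v * y' * u * z') w := e ▸ (hd.mul (.refl u)).mul hz'w
        have : w = x' * v * y' * u * z' :=
          hdw.eq (a := x' * v * y') rfl (by rw [hl, hd.1])
            (a' := x') (v := v) (b' := y' * u * z') (by simp only [mul_assoc])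
            (by rw [hs1, hr, hx'w.1])
        rw [this]
        exact Set.mul_mem_mul (Set.mul_mem_mul (Set.mul_mem_mul
          (Set.mul_mem_mul hx' hv) hy') hu) hz'
      · rcases split_max hz with rfl | ⟨x, hx, v, hv, y, hy, e', hr⟩
        · have := u.hpr
          subst e
          simp only [mul_l, mul_p, mul_r, one_l, one_r] at *
          omega
        obtain ⟨s', hs', hs'w⟩ := hdom s hs
        obtain ⟨x', hx', hx'w⟩ := hdom x hx
        obtain ⟨y', hy', hy'w⟩ := hdom y hy
        have hd : Dominates (x' * v * y') z := e' ▸ (hx'w.mul (.refl v)).mul hy'w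
        have hdw : Dominates (s' * u * x' * v * y') w := by
          have := (hs'w.mul (.refl u)).mul hd
          rw [← e] at this
          simpa only [mul_assoc] using this
        have hwr : w.r = s.p + u.p + z.r := by
          have : w.r = max (max s.r (s.p + u.r)) (s.p + u.p + z.r) := by rw [e]; rfl
          omega
        have : w = s' * u * x' * v * y' :=
          hdw.eq (a := s') (u := u) (b := x' * v * y') (by simp only [mul_assoc])
            (by rw [hl, hs'w.1]) (a' := s' * u * x') rfl
            (by simp only [mul_p]; rw [hwr, hr, hs'w.1, hx'w.1]; ring)
        rw [this]
        exact Set.mul_mem_mul (Set.mul_mem_mul (Set.mul_mem_mul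
          (Set.mul_mem_mul hs' hu) hx') hv) hy'
    · rintro w (rfl | ⟨_, ⟨x, hx, y, hy, rfl⟩, z, hz, rfl⟩ |
        ⟨_, ⟨_, ⟨_, ⟨x, hx, y, hy, rfl⟩, z, hz, rfl⟩, v, hv, rfl⟩, t, ht, rfl⟩)
      · exact one_mem _
      · exact mul_mem (mul_mem (hTM hx) (hLM hy)) (hTM hz)
      · exact mul_mem (mul_mem (mul_mem (mul_mem (hTM hx) (hLM hy)) (hTM hz)) (hLM hv)) (hTM ht)
  rw [key]
  exact isPoly_one.union (((hT.mul hL).mul hT).union ((((hT.mul hL).mul hT).mul hL).mul hT))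

/-! ### Comparison with the indexed form -/

theorem IsRat.isPoly {L : Set F} (h : IsRat L) : IsPoly L := by
  induction h with
  | finite S hS => exact isPoly_of_finite hS
  | union S T _ _ hS hT => exact hS.union hT
  | mul S T _ _ hS hT => exact hS.mul hT
  | star S _ hS => exact hS.star

theorem IsMonomial.exists_ofFn {S : Set F} (h : IsMonomial S) :
    ∃ (n : ℕ) (u : Fin (n + 1) → F) (X : Fin n → Set F), (∀ j : Fin n, (X j).Finite) ∧
      S = {u 0} * (List.ofFn fun j : Fin n => _root_.star (X j) * {u j.succ}).prod := by
  induction h with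
  | point u => exact ⟨0, fun _ => u, Fin.elim0, fun j => j.elim0, by simp⟩
  | cons v Y S hY _ ih =>
    obtain ⟨n, u, X, hX, rfl⟩ := ih
    refine ⟨n + 1, Fin.cons v u, Fin.cons Y X, ?_, ?_⟩
    · intro j
      cases j using Fin.cases with
      | zero => simpa using hY
      | succ j => simpa using hX j
    · simp only [List.ofFn_succ, List.prod_cons, Fin.cons_zero, Fin.cons_succ, mul_assoc]

theorem isRat_list_prod (l : List (Set F)) (h : ∀ S ∈ l, IsRat S) : IsRat l.prod := by
  induction l with
  | nil => exact .finite _ (Set.finite_singleton _)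
  | cons S l ih =>
    rw [List.prod_cons]
    exact .mul _ _ (h S (by simp)) (ih fun T hT => h T (by simp [hT]))

theorem isRat_iUnion {N : ℕ} (f : Fin N → Set F) (h : ∀ i, IsRat (f i)) : IsRat (⋃ i, f i) := by
  induction N with
  | zero => exact .finite _ (by simp)
  | succ N ih =>
    have : (⋃ i, f i) = f 0 ∪ ⋃ i : Fin N, f i.succ := by
      ext w; simp [Fin.exists_fin_succ]
    rw [this]
    exact .union _ _ (h 0) (ih _ fun i => h _)

end F

/-- A subset `L ⊆ F` is rational iff it is a finite union of subsets of
the form `u₀·X₁*·u₁·X₂*·u₂ ⋯ Xₙ*·uₙ` with `n ∈ ℕ`, `u₀, …, uₙ ∈ F` and `X₁, …, Xₙ`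
finite subsets of `F`. -/
theorem isRat_iff_star_height_one (L : Set F) :
    F.IsRat L ↔
      ∃ (N : ℕ) (f : Fin N → Set F),
        L = (⋃ i, f i) ∧
        ∀ i : Fin N, ∃ (n : ℕ) (u : Fin (n + 1) → F) (X : Fin n → Set F),
          (∀ j : Fin n, (X j).Finite) ∧
          f i = {u 0} * (List.ofFn fun j : Fin n => star (X j) * {u j.succ}).prod := by
  constructor
  · intro h
    obtain ⟨𝒮, hfin, hmono, rfl⟩ := h.isPoly
    obtain ⟨N, f, -, hf⟩ := hfin.fin_param
    refine ⟨N, f, ?_, fun i => (hmono _ (hf ▸ Set.mem_range_self i)).exists_ofFn⟩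
    rw [← hf, Set.sUnion_range]
  · rintro ⟨N, f, rfl, hf⟩
    refine F.isRat_iUnion f fun i => ?_
    obtain ⟨n, u, X, hX, e⟩ := hf i
    rw [e]
    refine .mul _ _ (.finite _ (Set.finite_singleton _)) (F.isRat_list_prod _ fun S hS => ?_)
    obtain ⟨j, rfl⟩ := List.mem_ofFn.1 hS
    exact .mul _ _ (.star _ (.finite _ (hX j))) (.finite _ (Set.finite_singleton _))
end
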